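/- Suppose P satisfies axiom (P6). If (u_1,…,u_n) and (v_1,…,v_n) are reduced P-products with u_1⋯u_n = v_1⋯v_n in G, n ≥ 2, and a_0 = a_n = 1 and a_1,…,a_{n−1} ∈ P are such that a_{i−1}^{-1} u_i a_i ∈ P and v_i = a_{i−1}^{-1} u_i a_i for all 1 ≤ i ≤ n, then a_i ∈ B_P for all 1 ≤ i ≤ n−1. -/

import Mathlib

open Metric Set

section Pregroup

variable {G : Type*} [Group G]

/-- A reduced `P`-product: a nonempty tuple of elements of `P` such that no two
consecutive entries multiply into `P`. -/
def IsReducedProd (P : Set G) (u : List G) : Prop :=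
  u ≠ [] ∧ (∀ x ∈ u, x ∈ P) ∧
    ∀ i : ℕ, ∀ h : i + 1 < u.length, u[i]'(Nat.lt_of_succ_lt h) * u[i + 1]'h ∉ P

/-- `G` has a pregroup structure with respect to the subset `P ⊆ G`. -/
structure IsPregroupStructure (P : Set G) : Prop where
  one_mem : (1 : G) ∈ P
  inv_mem : ∀ x ∈ P, x⁻¹ ∈ P
  p5 : ∀ u ∈ P, ∀ v ∈ P, ∀ w ∈ P, ∀ z ∈ P,
    u * v ∈ P → v * w ∈ P → w * z ∈ P → u * v * w ∈ P ∨ v * w * z ∈ P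
  exists_rep : ∀ g : G, ∃ u : List G, IsReducedProd P u ∧ u.prod = g
  uniq : ∀ u v : List G, IsReducedProd P u → IsReducedProd P v → u.prod = v.prod →
    u.length = v.length ∧
      ∃ a : ℕ → G, a 0 = 1 ∧ a u.length = 1 ∧
        (∀ i : ℕ, 0 < i → i < u.length → a i ∈ P) ∧
        ∀ i : ℕ, ∀ hu : i < u.length, ∀ hv : i < v.length,
          (a i)⁻¹ * u[i] * a (i + 1) ∈ P ∧ v[i] = (a i)⁻¹ * u[i] * a (i + 1)

/-- `B_P = {b ∈ P : zb ∈ P and bz ∈ P for all z ∈ P}`. -/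
def BP (P : Set G) : Set G :=
  {b | b ∈ P ∧ ∀ z ∈ P, z * b ∈ P ∧ b * z ∈ P}

/-- Axiom (P6). -/
def AxiomP6 (P : Set G) : Prop :=
  ∀ x ∈ P, ∀ y ∈ P, x * y ∉ P → ∀ a ∈ P, x * a ∈ P → a⁻¹ * y ∈ P → a ∈ BP P

/-- Axiom (H0): `B_P` is finite. -/
def AxiomH0 (P : Set G) : Prop := (BP P).Finite

end Pregroup

section Geometry

variable {X : Type*} [MetricSpace X]

/-- A geodesic parametrization (by arclength on `[0, dist x y]`) from `x` to `y`. -/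
def IsGeodesicParam (f : ℝ → X) (x y : X) : Prop :=
  f 0 = x ∧ f (dist x y) = y ∧
    ∀ a ∈ Icc (0 : ℝ) (dist x y), ∀ b ∈ Icc (0 : ℝ) (dist x y),
      dist (f a) (f b) = |a - b|

/-- `s` is a geodesic segment from `x` to `y`. -/
def IsGeodesicSegment (s : Set X) (x y : X) : Prop :=
  ∃ f : ℝ → X, IsGeodesicParam f x y ∧ s = f '' Icc (0 : ℝ) (dist x y)

/-- A geodesic metric space: any two points are joined by a geodesic segment. -/
def IsGeodesicSpace (X : Type*) [MetricSpace X] : Prop :=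
  ∀ x y : X, ∃ s : Set X, IsGeodesicSegment s x y

/-- A triangle with sides `s, t, r` is `C`-thin: each side lies in the closed
`C`-neighborhood of the union of the other two sides. -/
def ThinTriangle (C : ℝ) (s t r : Set X) : Prop :=
  s ⊆ cthickening C (t ∪ r) ∧ t ⊆ cthickening C (s ∪ r) ∧ r ⊆ cthickening C (s ∪ t)

end Geometry

section Cayley

variable {G : Type*} [Group G] {X : Type*} [MetricSpace X]

/-- The word length of `g` with respect to the generating set `S`. -/
noncomputable def wordLength (S : Set G) (g : G) : ℕ :=
  sInf {n | ∃ l : List G, l.length = n ∧ (∀ x ∈ l, x ∈ S ∨ x⁻¹ ∈ S) ∧ l.prod = g}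

/-- `ι : G → X` realizes the geodesic metric space `X` as the Cayley graph
`Γ(G,S)`: `S` generates `G`, the metric on vertices is the word metric, `X` is a
geodesic space, and every point of `X` is within `1/2` of a vertex. -/
structure IsCayleyGraph (S : Set G) (ι : G → X) : Prop where
  generates : Subgroup.closure S = ⊤
  dist_eq : ∀ g h : G, dist (ι g) (ι h) = wordLength S (g⁻¹ * h)
  geodesic : IsGeodesicSpace X
  dense : ∀ x : X, ∃ g : G, dist x (ι g) ≤ 1 / 2

/-- Axiom (H1), with constant `C₁`: geodesic triangles on vertices `1, p, pq`
(`p, q ∈ P`) are `C₁`-thin. -/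
def AxiomH1 (P : Set G) (ι : G → X) (C₁ : ℝ) : Prop :=
  ∀ p ∈ P, ∀ q ∈ P, ∀ s t r : Set X,
    IsGeodesicSegment s (ι 1) (ι p) → IsGeodesicSegment t (ι p) (ι (p * q)) →
      IsGeodesicSegment r (ι 1) (ι (p * q)) → ThinTriangle C₁ s t r

/-- Axiom (H2), with constant `C₂`: if the Gromov product `(p⁻¹ · q)_1` exceeds
`C₂` then `pq ∈ P`. -/
def AxiomH2 (P : Set G) (ι : G → X) (C₂ : ℝ) : Prop :=
  ∀ p ∈ P, ∀ q ∈ P,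
    (dist (ι 1) (ι p) + dist (ι 1) (ι q) - dist (ι p⁻¹) (ι q)) / 2 > C₂ → p * q ∈ P

/-- Axiom (H3), with constant `C₃`: every vertex on a geodesic from `1` to `p ∈ P`
is a reduced product `p₁ p₂` with `|p₂| ≤ C₃`. -/
def AxiomH3 (P : Set G) (ι : G → X) (C₃ : ℝ) : Prop :=
  ∀ p ∈ P, ∀ s : Set X, IsGeodesicSegment s (ι 1) (ι p) →
    ∀ x : G, ι x ∈ s →
      ∃ p₁ p₂ : G, IsReducedProd P [p₁, p₂] ∧ p₁ * p₂ = x ∧ dist (ι 1) (ι p₂) ≤ C₃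

/-- The path in `Γ(G,S)` defined by the `P`-product `u` based at `x`: a
concatenation of geodesic segments `[x u(i), x u(i+1)]`. -/
def IsPathOf (ι : G → X) (x : G) (u : List G) (pa : Set X) : Prop :=
  ∃ segs : Fin u.length → Set X,
    (∀ i : Fin u.length,
      IsGeodesicSegment (segs i)
        (ι (x * (u.take i.1).prod)) (ι (x * (u.take (i.1 + 1)).prod))) ∧
    pa = ⋃ i, segs i

end Cayley

/-!
The relations `vᵢ = aᵢ₋₁⁻¹ uᵢ aᵢ` telescope to `u₁ ⋯ uᵢ aᵢ = v₁ ⋯ vᵢ` and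
`aᵢ⁻¹ uᵢ₊₁ ⋯ uₙ = vᵢ₊₁ ⋯ vₙ`. If `uᵢ aᵢ ∉ P`, the left side of the first identity is a reduced
product with one factor more than the right side, contradicting the invariance of the length; so
`uᵢ aᵢ ∈ P`, and likewise `aᵢ⁻¹ uᵢ₊₁ ∈ P`. As `uᵢ uᵢ₊₁ ∉ P`, axiom (P6) gives `aᵢ ∈ B_P`.
-/

section ReducedProd

variable {G : Type*} [Group G] {P : Set G} {l r w : List G}

theorem isReducedProd_iff_isChain :
    IsReducedProd P w ↔ w ≠ [] ∧ (∀ x ∈ w, x ∈ P) ∧ w.IsChain (fun x y => x * y ∉ P) := by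
  rw [IsReducedProd, List.isChain_iff_getElem]

theorem isReducedProd_singleton {x : G} (hx : x ∈ P) : IsReducedProd P [x] := by
  simp [isReducedProd_iff_isChain, hx]

theorem IsReducedProd.of_infix (hw : IsReducedProd P w) (hl : l ≠ []) (h : l <:+: w) :
    IsReducedProd P l := by
  rw [isReducedProd_iff_isChain] at hw ⊢
  exact ⟨hl, fun x hx => hw.2.1 x (h.subset hx), hw.2.2.infix h⟩

theorem IsReducedProd.take (hw : IsReducedProd P w) {k : ℕ} (hk : k ≠ 0) :
    IsReducedProd P (w.take k) :=
  hw.of_infix (by simp [hk, hw.1]) (List.take_prefix k w).isInfix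

theorem IsReducedProd.drop (hw : IsReducedProd P w) {k : ℕ} (hk : k < w.length) :
    IsReducedProd P (w.drop k) :=
  hw.of_infix (by simpa using hk) (List.drop_suffix k w).isInfix

theorem IsReducedProd.append (hl : IsReducedProd P l) (hr : IsReducedProd P r)
    (hlr : l.getLast hl.1 * r.head hr.1 ∉ P) : IsReducedProd P (l ++ r) := by
  have hl' := isReducedProd_iff_isChain.1 hl
  have hr' := isReducedProd_iff_isChain.1 hr
  refine isReducedProd_iff_isChain.2 ⟨List.append_ne_nil_of_left_ne_nil hl.1 r, ?_, ?_⟩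
  · simpa only [List.mem_append, or_imp, forall_and] using ⟨hl'.2.1, hr'.2.1⟩
  · refine hl'.2.2.append hr'.2.2 ?_
    simpa [List.getLast?_eq_getLast_of_ne_nil hl.1, List.head?_eq_some_head hr.1] using hlr

theorem IsPregroupStructure.getLast_mul_head_mem (hP : IsPregroupStructure P)
    (hl : IsReducedProd P l) (hr : IsReducedProd P r) (hw : IsReducedProd P w)
    (hprod : l.prod * r.prod = w.prod) (hlen : l.length + r.length ≠ w.length) :
    l.getLast hl.1 * r.head hr.1 ∈ P := by
  by_contra hlr
  refine hlen ?_
  rw [← List.length_append]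
  exact (hP.uniq _ _ (hl.append hr hlr) hw (List.prod_append.trans hprod)).1

end ReducedProd

section Interleaving

variable {G : Type*} [Group G] {P : Set G} {a : ℕ → G} {u v : List G} {i : ℕ}

/-- The sequence `a` interleaves the words `u` and `v`: these have the same length and, for every
position `i`, `v i = (a i)⁻¹ * u i * a (i + 1)`. This is the relation between two reduced products
of the same element, with the end values `a 0` and `a u.length` left free so that it restricts to
subwords. -/
def Interleaves (a : ℕ → G) (u v : List G) : Prop :=
  u.length = v.length ∧
    ∀ i : ℕ, ∀ hu : i < u.length, ∀ hv : i < v.length, v[i] = (a i)⁻¹ * u[i] * a (i + 1)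

namespace Interleaves

theorem take (h : Interleaves a u v) (k : ℕ) : Interleaves a (u.take k) (v.take k) := by
  refine ⟨by simp only [List.length_take, h.1], fun i hu hv => ?_⟩
  simp only [List.getElem_take]
  exact h.2 i _ _

theorem drop (h : Interleaves a u v) (k : ℕ) :
    Interleaves (fun i => a (k + i)) (u.drop k) (v.drop k) := by
  refine ⟨by simp only [List.length_drop, h.1], fun i hu hv => ?_⟩
  simp only [List.getElem_drop]
  exact h.2 (k + i) _ _

theorem prod_eq (h : Interleaves a u v) : v.prod = (a 0)⁻¹ * u.prod * a u.length := by
  induction u generalizing a v with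
  | nil => simp [List.length_eq_zero_iff.1 h.1.symm]
  | cons x u ih =>
    obtain ⟨y, v, rfl⟩ := List.exists_cons_of_length_eq_add_one h.1.symm
    have hy : y = (a 0)⁻¹ * x * a 1 := h.2 0 (by simp) (by simp)
    have hv : v.prod = (a 1)⁻¹ * u.prod * a (1 + u.length) := ih (h.drop 1)
    rw [List.prod_cons, List.prod_cons, List.length_cons, hy, hv, add_comm 1]
    group

theorem getElem_mul_mem (h : Interleaves a u v) (hP : IsPregroupStructure P)
    (hu : IsReducedProd P u) (hv : IsReducedProd P v) (ha₀ : a 0 = 1) (hi : i < u.length)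
    (ha : a (i + 1) ∈ P) : u[i] * a (i + 1) ∈ P := by
  have hlen : (u.take (i + 1)).length = i + 1 := List.length_take_of_le hi
  have hlen' : (v.take (i + 1)).length = i + 1 := (h.take _).1.symm.trans hlen
  have hprod : (u.take (i + 1)).prod * [a (i + 1)].prod = (v.take (i + 1)).prod := by
    rw [(h.take _).prod_eq, ha₀, hlen, inv_one, one_mul, List.prod_singleton]
  simpa [List.getLast_eq_getElem, hlen] using
    hP.getLast_mul_head_mem (hu.take i.succ_ne_zero) (isReducedProd_singleton ha)
      (hv.take i.succ_ne_zero) hprod (by simp [hlen, hlen'])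

theorem inv_mul_getElem_mem (h : Interleaves a u v) (hP : IsPregroupStructure P)
    (hu : IsReducedProd P u) (hv : IsReducedProd P v) (ha₁ : a u.length = 1) (hi : i < u.length)
    (ha : a i ∈ P) : (a i)⁻¹ * u[i] ∈ P := by
  have hprod : [(a i)⁻¹].prod * (u.drop i).prod = (v.drop i).prod := by
    rw [(h.drop i).prod_eq, List.length_drop, Nat.add_sub_cancel' hi.le, ha₁, mul_one, add_zero,
      List.prod_singleton]
  simpa using hP.getLast_mul_head_mem (isReducedProd_singleton (hP.inv_mem _ ha)) (hu.drop hi)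
    (hv.drop (h.1 ▸ hi)) hprod (by simp [h.1])

end Interleaves

end Interleaving

/-- under (P6), the interleaving elements between two reduced
products of length `n ≥ 2` representing the same element lie in `B_P`. -/
theorem interleaving_elements_mem_BP {G : Type*} [Group G]
    (P : Set G) (hP : IsPregroupStructure P) (hP6 : AxiomP6 P)
    (u v : List G) (hu : IsReducedProd P u) (hv : IsReducedProd P v)
    (heq : u.prod = v.prod) (hn : 2 ≤ u.length) (hlen : u.length = v.length)
    (a : ℕ → G) (ha0 : a 0 = 1) (han : a u.length = 1)
    (haP : ∀ i : ℕ, 0 < i → i < u.length → a i ∈ P)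
    (hkey : ∀ i : ℕ, ∀ hu' : i < u.length, ∀ hv' : i < v.length,
      (a i)⁻¹ * u[i] * a (i + 1) ∈ P ∧ v[i] = (a i)⁻¹ * u[i] * a (i + 1)) :
    ∀ i : ℕ, 1 ≤ i → i ≤ u.length - 1 → a i ∈ BP P := by
  have huv : Interleaves a u v := ⟨hlen, fun i hu' hv' => (hkey i hu' hv').2⟩
  intro k hk hk'
  obtain ⟨i, rfl⟩ := Nat.exists_eq_add_of_le' hk
  have hi : i + 1 < u.length := by lia
  have haPi : a (i + 1) ∈ P := haP _ i.succ_pos hi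
  have huP : ∀ {j} (hj : j < u.length), u[j] ∈ P := fun hj => hu.2.1 _ (List.getElem_mem hj)
  exact hP6 u[i] (huP _) u[i + 1] (huP hi) (hu.2.2 i hi) (a (i + 1)) haPi
    (huv.getElem_mul_mem hP hu hv ha0 _ haPi) (huv.inv_mul_getElem_mem hP hu hv han hi haPi)
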